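/- arXiv:2404.14672 — 4 statements merged into one kernel-verified Lean document; each statement's English description precedes it below -/
import Mathlib

section
/- Let R be a commutative noetherian local ring with maximal ideal m, and let M be an m-power torsion R-module. If there is an element r ∈ m such that the kernel of multiplication by r on M (the submodule {x ∈ M | r·x = 0}) is an artinian R-module, then M itself is an artinian R-module. -/
/-- Elements of `ker r` of the form `r ^ i • y` with `y ∈ N`. -/
def levelSub {R M : Type*} [CommRing R] [AddCommGroup M] [Module R M] (r : R)
    (N : Submodule R M) (i : ℕ) : Submodule R (LinearMap.ker (LinearMap.lsmul R M r)) :=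
  (N.map (LinearMap.lsmul R M (r ^ i))).comap (Submodule.subtype _)

theorem mem_levelSub {R M : Type*} [CommRing R] [AddCommGroup M] [Module R M] (r : R)
    (N : Submodule R M) (i : ℕ) (k : LinearMap.ker (LinearMap.lsmul R M r)) :
    k ∈ levelSub r N i ↔ ∃ y ∈ N, r ^ i • y = (k : M) := Iff.rfl

/-- Let `R` be a commutative noetherian local ring with maximal ideal `m`, and let `M` be an
`m`-power torsion `R`-module.  If there is an element `r ∈ m` such that the kernel of
multiplication by `r` on `M` is an artinian `R`-module, then `M` is an artinian `R`-module. -/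
theorem artinian_of_ker_smul_artinian
    (R : Type*) [CommRing R] [IsNoetherianRing R] [IsLocalRing R]
    (M : Type*) [AddCommGroup M] [Module R M]
    (htors : ∀ x : M, ∃ n : ℕ, ∀ a ∈ (IsLocalRing.maximalIdeal R) ^ n, a • x = 0)
    (r : R) (hr : r ∈ IsLocalRing.maximalIdeal R)
    (hker : IsArtinian R (LinearMap.ker (LinearMap.lsmul R M r))) :
    IsArtinian R M := by
  classical
  rw [← monotone_stabilizes_iff_artinian] at hker ⊢
  intro f
  have hf : ∀ {a b : ℕ}, a ≤ b → ∀ x : M, x ∈ OrderDual.ofDual (f b) → x ∈ OrderDual.ofDual (f a) :=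
    fun h x hx => f.monotone h hx
  have hanti : ∀ {a b i j : ℕ}, a ≤ b → i ≤ j →
      levelSub r (OrderDual.ofDual (f b)) j ≤ levelSub r (OrderDual.ofDual (f a)) i := by
    intro a b i j hab hij k hk
    rw [mem_levelSub] at hk ⊢
    obtain ⟨y, hy, hyk⟩ := hk
    refine ⟨r ^ (j - i) • y, Submodule.smul_mem _ _ (hf hab y hy), ?_⟩
    rw [smul_smul, ← pow_add, Nat.add_sub_cancel' hij, hyk]
  obtain ⟨n0, hn0⟩ := hker ⟨fun n => OrderDual.toDual (levelSub r (OrderDual.ofDual (f n)) n),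
    fun a b hab => hanti hab hab⟩
  have hcol : ∀ i : ℕ, ∃ n, ∀ m, n ≤ m →
      levelSub r (OrderDual.ofDual (f n)) i = levelSub r (OrderDual.ofDual (f m)) i := by
    intro i
    obtain ⟨n, hn⟩ := hker ⟨fun n => OrderDual.toDual (levelSub r (OrderDual.ofDual (f n)) i),
      fun a b hab => hanti hab le_rfl⟩
    exact ⟨n, fun m hm => hn m hm⟩
  choose c hc using hcol
  let J := max n0 ((Finset.range n0).sup c)
  have hstab : ∀ i m, J ≤ m →
      levelSub r (OrderDual.ofDual (f J)) i ≤ levelSub r (OrderDual.ofDual (f m)) i := by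
    intro i m hm
    have hJ0 : n0 ≤ J := le_max_left _ _
    by_cases hi : i < n0
    · have hcJ : c i ≤ J :=
        (Finset.le_sup (f := c) (Finset.mem_range.2 hi)).trans (le_max_right _ _)
      rw [← hc i J hcJ, ← hc i m (hcJ.trans hm)]
    · have hi' : n0 ≤ i := not_lt.1 hi
      have h1 : levelSub r (OrderDual.ofDual (f n0)) n0 =
          levelSub r (OrderDual.ofDual (f (max i m))) (max i m) :=
        hn0 (max i m) (hi'.trans (le_max_left _ _))
      calc _ ≤ levelSub r (OrderDual.ofDual (f n0)) n0 := hanti hJ0 hi'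
        _ = _ := h1
        _ ≤ _ := hanti (le_max_right _ _) (le_max_left _ _)
  refine ⟨J, fun m hm => le_antisymm (f.monotone hm) ?_⟩
  have key : ∀ n : ℕ, ∀ x ∈ OrderDual.ofDual (f J), r ^ n • x = 0 →
      x ∈ OrderDual.ofDual (f m) := by
    intro n
    induction n with
    | zero =>
      intro x _ h
      rw [pow_zero, one_smul] at h
      rw [h]
      exact Submodule.zero_mem _
    | succ i ih =>
      intro x hx h
      have hk : r ^ i • x ∈ LinearMap.ker (LinearMap.lsmul R M r) := by
        rw [LinearMap.mem_ker, LinearMap.lsmul_apply, smul_smul, ← pow_succ', h]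
      have h2 := hstab i m hm ((mem_levelSub r _ i ⟨_, hk⟩).2 ⟨x, hx, rfl⟩)
      obtain ⟨y, hy, hyx⟩ := (mem_levelSub r _ i _).1 h2
      have h3 := ih (x - y) (Submodule.sub_mem _ hx (hf hm y hy)) (by
        rw [smul_sub, hyx, sub_self])
      have := Submodule.add_mem _ h3 hy
      rwa [sub_add_cancel] at this
  intro x hx
  obtain ⟨n, hn⟩ := htors x
  exact key n x hx (hn _ (Ideal.pow_mem_pow hr n))
end

section
/- Let R be a commutative noetherian local ring with maximal ideal m and residue field k = R/m, let E be an injective hull of k, and let M be an m-power torsion R-module such that the biduality map δ_M : M → Hom_R(Hom_R(M, E), E) is an isomorphism. Then for every submodule N ⊆ M, the biduality maps δ_N : N → Hom_R(Hom_R(N, E), E) and δ_{M/N} : M/N → Hom_R(Hom_R(M/N, E), E) are also isomorphisms. -/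
universe u v w

theorem aux_small (R : Type u) [CommRing R] [IsNoetherianRing R] [IsLocalRing R]
    [Small.{v} (IsLocalRing.ResidueField R)] : Small.{v} R := by
  let m := IsLocalRing.maximalIdeal R
  have key : ∀ n : ℕ, Small.{v} (R ⧸ m ^ n) := by
    intro n
    induction n with
    | zero =>
      have : Subsingleton (R ⧸ m ^ 0) := by
        rw [pow_zero, Ideal.one_eq_top]; infer_instance
      infer_instance
    | succ n ih =>
      obtain ⟨d, s, hs⟩ := Submodule.fg_iff_exists_fin_generating_family.mp
        ((isNoetherianRing_iff_ideal_fg R).mp inferInstance (m ^ n))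
      let f : (R ⧸ m ^ n) × (Fin d → IsLocalRing.ResidueField R) → R ⧸ m ^ (n + 1) := fun p =>
        Ideal.Quotient.mk _ (Function.surjInv (Ideal.Quotient.mk_surjective (I := m ^ n)) p.1 +
          ∑ i, Function.surjInv (IsLocalRing.residue_surjective (R := R)) (p.2 i) * s i)
      refine small_of_surjective (f := f) ?_
      intro y
      obtain ⟨r, rfl⟩ := Ideal.Quotient.mk_surjective y
      have h1 := Function.surjInv_eq (Ideal.Quotient.mk_surjective (I := m ^ n))
        (Ideal.Quotient.mk _ r)
      set r' := Function.surjInv (Ideal.Quotient.mk_surjective (I := m ^ n))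
        (Ideal.Quotient.mk _ r) with hr'
      have h2 : r - r' ∈ m ^ n := Ideal.Quotient.eq.mp h1.symm
      rw [← hs] at h2
      obtain ⟨c, hc⟩ := (Submodule.mem_span_range_iff_exists_fun R).mp h2
      refine ⟨(Ideal.Quotient.mk _ r, fun i => IsLocalRing.residue R (c i)), ?_⟩
      refine Ideal.Quotient.eq.mpr ?_
      simp only [← hr']
      have : ∀ t : R, r' + t - r = t - ∑ i, c i • s i := by
        intro t; rw [hc]; ring
      rw [this, ← Finset.sum_sub_distrib]
      refine Ideal.sum_mem _ fun i _ => ?_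
      rw [smul_eq_mul, ← sub_mul, pow_succ']
      refine Ideal.mul_mem_mul ?_ ?_
      · exact Ideal.Quotient.eq.mp
          (Function.surjInv_eq (IsLocalRing.residue_surjective (R := R)) _)
      · rw [← hs]; exact Submodule.subset_span ⟨i, rfl⟩
  refine small_of_injective (β := ∀ n : ℕ, R ⧸ m ^ n)
    (f := fun r n => Ideal.Quotient.mk _ r) ?_
  intro a b hab
  have hmem : a - b ∈ (⨅ n : ℕ, m ^ n) := by
    rw [Ideal.mem_iInf]
    exact fun n => Ideal.Quotient.eq.mp (congrFun hab n)
  rw [Ideal.iInf_pow_eq_bot_of_isLocalRing m (Ideal.IsPrime.ne_top inferInstance)] at hmem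
  exact sub_eq_zero.mp hmem

theorem aux_sep (R : Type u) [CommRing R] [IsLocalRing R] [Small.{v} R]
    (E : Type v) [AddCommGroup E] [Module R E] [Module.Injective R E]
    (ι : IsLocalRing.ResidueField R →ₗ[R] E) (hι : Function.Injective ι)
    (X : Type w) [AddCommGroup X] [Module R X] (x : X) (hx : ∀ f : X →ₗ[R] E, f x = 0) :
    x = 0 := by
  by_contra hne
  let t := LinearMap.toSpanSingleton R X x
  have hle : LinearMap.ker t ≤ IsLocalRing.maximalIdeal R := by
    refine IsLocalRing.le_maximalIdeal fun h => hne ?_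
    have : (1 : R) ∈ LinearMap.ker t := by rw [h]; trivial
    simpa [t] using this
  let g : R →ₗ[R] E := ι ∘ₗ (Algebra.linearMap R (IsLocalRing.ResidueField R))
  have hg : LinearMap.ker t ≤ LinearMap.ker g := by
    intro r hr
    have : IsLocalRing.residue R r = 0 := (IsLocalRing.residue_eq_zero_iff r).mpr (hle hr)
    change ι (IsLocalRing.residue R r) = 0
    rw [this, map_zero]
  obtain ⟨h, hh⟩ := Module.Injective.extension_property R E _ _
    ((LinearMap.ker t).liftQ t le_rfl)
    (LinearMap.ker_eq_bot.mp (Submodule.ker_liftQ_eq_bot _ _ _ le_rfl))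
    ((LinearMap.ker t).liftQ g hg)
  have h1 := LinearMap.congr_fun hh (Submodule.Quotient.mk 1)
  simp only [LinearMap.comp_apply, Submodule.liftQ_apply] at h1
  have h2 : t 1 = x := by simp [t]
  rw [h2, hx] at h1
  have h3 : ι 1 = 0 := by
    have : g 1 = ι 1 := by simp [g]
    rw [← this, ← h1]
  exact one_ne_zero (hι (h3.trans (map_zero ι).symm))


/-- Matlis reflexive torsion modules are closed under submodules and quotients:  if `R` is a
commutative noetherian local ring with maximal ideal `m`, residue field `k`, and `E` an injective
hull of `k`, and `M` is an `m`-power torsion module whose biduality map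
`M → Hom_R(Hom_R(M,E),E)` is an isomorphism, then for every submodule `N ⊆ M` the biduality maps
of `N` and of `M/N` are isomorphisms as well. -/
theorem biduality_bijective_of_submodule_and_quotient
    (R : Type*) [CommRing R] [IsNoetherianRing R] [IsLocalRing R]
    (E : Type*) [AddCommGroup E] [Module R E] [Module.Injective R E]
    (ι : IsLocalRing.ResidueField R →ₗ[R] E) (hι : Function.Injective ι)
    (hess : ∀ N : Submodule R E, N ≠ ⊥ → ∃ x ∈ N, x ≠ 0 ∧ x ∈ LinearMap.range ι)
    (M : Type*) [AddCommGroup M] [Module R M]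
    (htors : ∀ x : M, ∃ n : ℕ, ∀ a ∈ (IsLocalRing.maximalIdeal R) ^ n, a • x = 0)
    (hM : Function.Bijective
      ⇑((LinearMap.id : (M →ₗ[R] E) →ₗ[R] (M →ₗ[R] E)).flip))
    (N : Submodule R M) :
    Function.Bijective
        ⇑((LinearMap.id : (↥N →ₗ[R] E) →ₗ[R] (↥N →ₗ[R] E)).flip) ∧
      Function.Bijective
        ⇑((LinearMap.id : ((M ⧸ N) →ₗ[R] E) →ₗ[R] ((M ⧸ N) →ₗ[R] E)).flip) := by
  have hk : Small (IsLocalRing.ResidueField R) := small_of_injective hι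
  have hR := aux_small R
  have inj : ∀ {X : Type _} [AddCommGroup X] [Module R X], Function.Injective
      ⇑((LinearMap.id : (X →ₗ[R] E) →ₗ[R] (X →ₗ[R] E)).flip) := by
    intro X _ _
    refine (injective_iff_map_eq_zero _).mpr fun x hx => ?_
    exact aux_sep R E ι hι X x fun f => LinearMap.congr_fun hx f
  refine ⟨⟨inj, fun φ => ?_⟩, ⟨inj, fun φ => ?_⟩⟩
  · obtain ⟨x, hx⟩ := hM.2 (φ ∘ₗ LinearMap.lcomp R E N.subtype)
    have hx' : ∀ f : M →ₗ[R] E, f x = φ (f ∘ₗ N.subtype) := fun f => LinearMap.congr_fun hx f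
    have hxN : x ∈ N := by
      rw [← Submodule.Quotient.mk_eq_zero]
      refine aux_sep R E ι hι _ _ fun f => ?_
      have h0 : (f ∘ₗ N.mkQ) ∘ₗ N.subtype = 0 := by
        ext y; simp [(Submodule.Quotient.mk_eq_zero N).mpr y.2]
      have := hx' (f ∘ₗ N.mkQ)
      rw [h0, map_zero] at this
      exact this
    refine ⟨⟨x, hxN⟩, LinearMap.ext fun g => ?_⟩
    obtain ⟨h, hh⟩ := Module.Injective.extension_property R E _ _ N.subtype
      N.injective_subtype g
    rw [← hh, ← hx' h]
    rfl
  · obtain ⟨ψ, hψ⟩ := Module.Injective.extension_property R E _ _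
      (LinearMap.lcomp R E N.mkQ) (fun f g hfg => by
        ext y; exact LinearMap.congr_fun hfg y) φ
    obtain ⟨x, hx⟩ := hM.2 ψ
    refine ⟨N.mkQ x, LinearMap.ext fun g => ?_⟩
    rw [← hψ, ← hx]
    rfl
end

section
/- Let R be a commutative noetherian local ring with maximal ideal m and residue field k = R/m, and let M be an m-power torsion R-module whose socle Soc(M) = {x ∈ M | a·x = 0 for all a ∈ m} is a finite-dimensional k-vector space. Then M is an artinian R-module. -/
theorem aux_two_index {R K : Type*} [CommRing R] [AddCommGroup K] [Module R K] [IsArtinian R K]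
    (g : ℕ → ℕ → Submodule R K) (h1 : ∀ n, Antitone fun j => g j n)
    (h2 : ∀ j, Antitone (g j)) : ∃ J, ∀ j, J ≤ j → ∀ n, g J n = g j n := by
  obtain ⟨D, hD⟩ := IsArtinian.monotone_stabilizes (R := R) (M := K)
    ⟨fun j => OrderDual.toDual (g j j), fun i j hij =>
      OrderDual.toDual_le_toDual.2 ((h1 j hij).trans (h2 i hij))⟩
  have hD' : ∀ m, D ≤ m → g D D = g m m := hD
  have hcol : ∀ n, ∃ J, ∀ j, J ≤ j → g J n = g j n := fun n =>
    IsArtinian.monotone_stabilizes (R := R) (M := K)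
      ⟨fun j => OrderDual.toDual (g j n), fun i j hij =>
        OrderDual.toDual_le_toDual.2 (h1 n hij)⟩
  choose c hc using hcol
  have key : ∀ j n, D ≤ j → D ≤ n → g j n = g D D := by
    intro j n hj hn
    apply le_antisymm
    · exact (h1 n hj).trans (h2 D hn)
    · rw [hD' (max j n) (hj.trans (le_max_left _ _))]
      exact (h1 _ (le_max_left j n)).trans (h2 j (le_max_right j n))
  refine ⟨max D ((Finset.range D).sup c), fun j hj n => ?_⟩
  have hDj : D ≤ j := (le_max_left _ _).trans hj
  by_cases hn : D ≤ n
  · rw [key _ n (le_max_left _ _) hn, key j n hDj hn]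
  · have : c n ≤ (Finset.range D).sup c :=
      Finset.le_sup (f := c) (Finset.mem_range.2 (not_le.1 hn))
    have h3 := this.trans (le_max_right D _)
    rw [← hc n _ h3, ← hc n j (h3.trans hj)]

theorem aux_one {R M : Type*} [CommRing R] [AddCommGroup M] [Module R M] (a : R)
    (ha : ∀ x : M, ∃ n : ℕ, a ^ n • x = 0) [IsArtinian R (Submodule.torsionBy R M a)] :
    IsArtinian R M := by
  rw [← monotone_stabilizes_iff_artinian]
  intro f
  let N : ℕ → Submodule R M := fun j => OrderDual.ofDual (f j)
  have hN : Antitone N := fun i j hij => f.monotone hij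
  let g : ℕ → ℕ → Submodule R (Submodule.torsionBy R M a) := fun j n =>
    ((N j).map (LinearMap.lsmul R M (a ^ n))).comap (Submodule.torsionBy R M a).subtype
  obtain ⟨J, hJ⟩ := aux_two_index g
    (fun n i j hij => Submodule.comap_mono (Submodule.map_mono (hN hij)))
    (fun j => antitone_nat_of_succ_le (by
      rintro n y ⟨x, hx, hxy⟩
      refine ⟨a • x, (N j).smul_mem a hx, ?_⟩
      rw [← hxy]
      change a ^ n • a • x = a ^ (n + 1) • x
      rw [smul_smul, ← pow_succ]))
  refine ⟨J, fun j hj => ?_⟩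
  change N J = N j
  refine le_antisymm ?_ (hN hj)
  have key : ∀ n : ℕ, ∀ x ∈ N J, a ^ n • x = 0 → x ∈ N j := by
    intro n
    induction n with
    | zero => intro x _ h; simp at h; simp [h]
    | succ n ih =>
      intro x hx h
      have hk : a ^ n • x ∈ Submodule.torsionBy R M a := by
        rw [Submodule.mem_torsionBy_iff, smul_smul, ← pow_succ', h]
      have hm : (⟨_, hk⟩ : Submodule.torsionBy R M a) ∈ g J n := ⟨x, hx, rfl⟩
      rw [hJ j hj n] at hm
      obtain ⟨y, hy, hxy⟩ := hm
      have hxy' : a ^ n • y = a ^ n • x := hxy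
      have := ih (x - y) (sub_mem hx (hN hj hy)) (by rw [smul_sub, hxy', sub_self])
      simpa using add_mem this hy
  intro x hx
  obtain ⟨n, hn⟩ := ha x
  exact key n x hx hn

theorem aux_finset {R : Type*} [CommRing R] (s : Finset R) :
    ∀ (M : Type*) [AddCommGroup M] [Module R M],
    (∀ a ∈ s, ∀ x : M, ∃ n : ℕ, a ^ n • x = 0) →
    IsArtinian R (Submodule.torsionBySet R M (s : Set R)) → IsArtinian R M := by
  classical
  induction s using Finset.induction_on with
  | empty =>
    intro M _ _ _ h
    refine isArtinian_of_injective (P := Submodule.torsionBySet R M ((∅ : Finset R) : Set R))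
      (LinearMap.id.codRestrict _ fun x => ?_) fun x y hxy => congrArg Subtype.val hxy
    simp [Submodule.mem_torsionBySet_iff]
  | insert a s _ ih =>
    intro M _ _ hs h
    have : IsArtinian R (Submodule.torsionBy R M a) := by
      apply ih
      · rintro b hb ⟨x, hx⟩
        obtain ⟨n, hn⟩ := hs b (Finset.mem_insert_of_mem hb) x
        exact ⟨n, Subtype.ext hn⟩
      · refine isArtinian_of_injective
          (P := Submodule.torsionBySet R M ((insert a s : Finset R) : Set R))
          (((Submodule.torsionBy R M a).subtype.comp (Submodule.subtype _)).codRestrict _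
            fun x => ?_) fun x y hxy => by
              have h0 := congrArg Subtype.val hxy
              exact Subtype.ext (Subtype.ext h0)
        rw [Submodule.mem_torsionBySet_iff]
        rintro ⟨b, hb⟩
        rcases Finset.mem_insert.1 (Finset.mem_coe.1 hb) with rfl | hb
        · exact x.1.2
        · exact congrArg Subtype.val ((Submodule.mem_torsionBySet_iff _ _).1 x.2 ⟨b, hb⟩)
    exact aux_one a (hs a (Finset.mem_insert_self _ _))


/-- Let `R` be a commutative noetherian local ring with maximal ideal `m` and residue field
`k = R/m`, and let `M` be an `m`-power torsion `R`-module whose socle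
`Soc(M) = {x ∈ M | a • x = 0 for all a ∈ m}` (here realised as `Submodule.torsionBySet R M m`,
which is canonically a `k`-vector space) is finite-dimensional over `k`.
Then `M` is an artinian `R`-module. -/
theorem artinian_of_finite_socle
    (R : Type*) [CommRing R] [IsNoetherianRing R] [IsLocalRing R]
    (M : Type*) [AddCommGroup M] [Module R M]
    (htors : ∀ x : M, ∃ n : ℕ, ∀ a ∈ (IsLocalRing.maximalIdeal R) ^ n, a • x = 0)
    (hsoc : Module.Finite (R ⧸ IsLocalRing.maximalIdeal R)
      ↥(Submodule.torsionBySet R M (IsLocalRing.maximalIdeal R : Set R))) :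
    IsArtinian R M := by
  obtain ⟨s, hs⟩ := IsNoetherian.noetherian (IsLocalRing.maximalIdeal R)
  have hart : IsArtinian R
      (Submodule.torsionBySet R M (IsLocalRing.maximalIdeal R : Set R)) := by
    let _ : Field (R ⧸ IsLocalRing.maximalIdeal R) := Ideal.Quotient.field _
    have : IsArtinian (R ⧸ IsLocalRing.maximalIdeal R)
      (Submodule.torsionBySet R M (IsLocalRing.maximalIdeal R : Set R)) := inferInstance
    exact (isArtinian_of_surjective_algebraMap
      (Ideal.Quotient.mk_surjective (I := IsLocalRing.maximalIdeal R)))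
  refine aux_finset s M (fun a ha x => ?_) ?_
  · obtain ⟨n, hn⟩ := htors x
    have : a ∈ IsLocalRing.maximalIdeal R := hs ▸ Submodule.subset_span ha
    exact ⟨n, hn _ (Ideal.pow_mem_pow this n)⟩
  · rw [Submodule.torsionBySet_eq_torsionBySet_span, Ideal.span, hs]
    exact hart
end

section
/- Let K be a field of characteristic p > 0 and set A = K[t]/(t^p), with K regarded as the A-module A/(t). An A-module N is isomorphic to a direct sum D ⊕ F, where D is a finite-dimensional K-vector space and F is a free A-module, if and only if Ext^1_A(K, N) is a finite-dimensional K-vector space. -/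
universe u

/-- The truncated polynomial algebra `A = K[t]/(t^p)`. -/
noncomputable abbrev TruncatedPolynomialAlgebra (K : Type u) [Field K] (p : ℕ) : Type u :=
  Polynomial K ⧸ Ideal.span {(Polynomial.X : Polynomial K) ^ p}

section AuxCat
open CategoryTheory

section
variable {A : Type u} [CommRing A] (a b : A) (hab : a * b = 0)

noncomputable abbrev perCx : ChainComplex (ModuleCat.{u} A) ℕ :=
  HomologicalComplex.alternatingConst (ModuleCat.of A A)
    (φ := ModuleCat.ofHom (LinearMap.mulLeft A b)) (ψ := ModuleCat.ofHom (LinearMap.mulLeft A a))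
    (by ext; simp [hab]) (by ext; simp [mul_comm b a, hab])
    fun _ _ => ComplexShape.down_nat_odd_add

variable (M : Type u) [AddCommGroup M] [Module A M] (m : M) (hm : a • m = 0)

noncomputable def perπ : perCx a b hab ⟶
    (ChainComplex.single₀ (ModuleCat.{u} A)).obj (ModuleCat.of A M) :=
  ((perCx a b hab).toSingle₀Equiv _).symm
    ⟨ModuleCat.ofHom (LinearMap.toSpanSingleton A M m), by
      ext
      show (a * 1) • m = 0
      rw [mul_one, hm]⟩

theorem perπ_quasiIso (hsurj : ∀ x : M, ∃ r : A, r • m = x)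
    (hker : ∀ r : A, r • m = 0 → ∃ s, r = a * s)
    (h1 : ∀ r : A, a * r = 0 → ∃ s, r = b * s)
    (h2 : ∀ r : A, b * r = 0 → ∃ s, r = a * s) : QuasiIso (perπ a b hab M m hm) where
  quasiIsoAt n := by
    induction n with
    | zero =>
      simp only [perπ]
      rw [ChainComplex.quasiIsoAt₀_iff, ShortComplex.quasiIso_iff_of_zeros' _ rfl rfl rfl]
      constructor
      · rw [ShortComplex.moduleCat_exact_iff]
        intro r hr
        obtain ⟨s, hs⟩ := hker r hr
        exact ⟨s, hs.symm⟩
      · rw [ModuleCat.epi_iff_surjective]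
        intro x
        obtain ⟨r, hr⟩ := hsurj x
        exact ⟨r, hr⟩
    | succ n _ =>
      rw [quasiIsoAt_iff_exactAt' (hL := ChainComplex.exactAt_succ_single_obj ..),
          HomologicalComplex.exactAt_iff' _ (n + 2) (n + 1) n (by simp) (by simp)]
      rw [ShortComplex.moduleCat_exact_iff]
      by_cases hm : Odd (n + 1)
      · intro (r : A) hr
        have e1 : (perCx a b hab).d (n+1) n = ModuleCat.ofHom (LinearMap.mulLeft A a) := by
          have h : ¬ Even (n+1) := Nat.not_even_iff_odd.2 hm
          exact (dif_pos rfl).trans (dif_neg h)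
        have e2 : (perCx a b hab).d (n+2) (n+1) = ModuleCat.ofHom (LinearMap.mulLeft A b) := by
          have h : Even (n+2) := hm.add_one
          exact (dif_pos rfl).trans (dif_pos h)
        have hr' : (perCx a b hab).d (n+1) n r = 0 := hr
        rw [e1] at hr'
        obtain ⟨s, hs⟩ := h1 r hr'
        refine ⟨s, ?_⟩
        show (perCx a b hab).d (n+2) (n+1) s = r
        rw [e2]
        exact hs.symm
      · intro (r : A) hr
        rw [Nat.not_odd_iff_even] at hm
        have e1 : (perCx a b hab).d (n+1) n = ModuleCat.ofHom (LinearMap.mulLeft A b) := by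
          exact (dif_pos rfl).trans (dif_pos hm)
        have e2 : (perCx a b hab).d (n+2) (n+1) = ModuleCat.ofHom (LinearMap.mulLeft A a) := by
          have h : ¬ Even (n+2) := Nat.not_even_iff_odd.2 hm.add_one
          exact (dif_pos rfl).trans (dif_neg h)
        have hr' : (perCx a b hab).d (n+1) n r = 0 := hr
        rw [e1] at hr'
        obtain ⟨s, hs⟩ := h2 r hr'
        refine ⟨s, ?_⟩
        show (perCx a b hab).d (n+2) (n+1) s = r
        rw [e2]
        exact hs.symm

noncomputable def perRes (hsurj : ∀ x : M, ∃ r : A, r • m = x)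
    (hker : ∀ r : A, r • m = 0 → ∃ s, r = a * s)
    (h1 : ∀ r : A, a * r = 0 → ∃ s, r = b * s)
    (h2 : ∀ r : A, b * r = 0 → ∃ s, r = a * s) : ProjectiveResolution (ModuleCat.of A M) where
  complex := perCx a b hab
  projective _ := (IsProjective.iff_projective _).1 (inferInstanceAs (Module.Projective A A))
  π := perπ a b hab M m hm
  quasiIso := perπ_quasiIso a b hab M m hm hsurj hker h1 h2

variable {K : Type u} [Field K] [Algebra K A] {N : Type u} [AddCommGroup N] [Module A N] [Module K N]
  [IsScalarTower K A N]


noncomputable def mkIsoMod {X Y : ModuleCat.{u} K} (f : X → Y) (g : Y → X) (hl : ∀ x, g (f x) = x)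
    (hr : ∀ y, f (g y) = y) (hadd : ∀ x y, f (x + y) = f x + f y)
    (hsmul : ∀ (c : K) x, f (c • x) = c • f x) : X ≅ Y :=
  LinearEquiv.toModuleIso
  { toFun := f
    invFun := g
    left_inv := hl
    right_inv := hr
    map_add' := hadd
    map_smul' := hsmul }

variable (A K N) in
noncomputable def homIso : ((linearYoneda K (ModuleCat.{u} A)).obj (ModuleCat.of A N)).obj
    (Opposite.op (ModuleCat.of A A)) ≅ ModuleCat.of K N :=
  mkIsoMod
    (fun (f : ModuleCat.of A A ⟶ ModuleCat.of A N) => f.hom (1 : A))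
    (fun x => ModuleCat.ofHom (LinearMap.toSpanSingleton A N x))
    (fun (f : ModuleCat.of A A ⟶ ModuleCat.of A N) => by
      refine ModuleCat.hom_ext (LinearMap.ext_ring ?_)
      show (1 : A) • f.hom (1 : A) = f.hom (1 : A)
      rw [one_smul])
    (fun x => by simp)
    (fun (f g : ModuleCat.of A A ⟶ ModuleCat.of A N) => by rfl)
    (fun c (f : ModuleCat.of A A ⟶ ModuleCat.of A N) => by
      show (algebraMap K A c) • f.hom (1 : A) = c • (f.hom (1:A) : N)
      rw [algebraMap_smul])

variable (K N) in
noncomputable def scN : ShortComplex (ModuleCat.{u} K) :=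
  ShortComplex.mk (ModuleCat.ofHom (Algebra.lsmul K K N a)) (ModuleCat.ofHom (Algebra.lsmul K K N b))
   (by ext x; simp [smul_smul, mul_comm b a, hab])

variable (K N) in
noncomputable def scIso : ((perCx a b hab).linearYonedaObj K (ModuleCat.of A N)).sc' 0 1 2 ≅
   scN a b hab K N :=
 ShortComplex.isoMk (homIso A K N) (homIso A K N) (homIso A K N)
   (by
    ext (f : ModuleCat.of A A ⟶ ModuleCat.of A N)
    show a • f.hom (1:A) = f.hom (a * 1)
    rw [← smul_eq_mul, map_smul])
   (by
    ext (f : ModuleCat.of A A ⟶ ModuleCat.of A N)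
    show b • f.hom (1:A) = f.hom (b * 1)
    rw [← smul_eq_mul, map_smul])

noncomputable def homologyEquivQuot (S : ShortComplex (ModuleCat.{u} K)) :
    S.homology ≃ₗ[K] (LinearMap.ker S.g.hom ⧸
      (LinearMap.range S.f.hom).submoduleOf (LinearMap.ker S.g.hom)) :=
  S.moduleCatHomologyIso.toLinearEquiv.trans (Submodule.quotEquivOfEq _ _ (by
    ext x
    constructor
    · rintro ⟨y, hy⟩
      exact ⟨y, congrArg Subtype.val hy⟩
    · rintro ⟨y, hy⟩
      exact ⟨y, Subtype.ext hy⟩))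

variable (K N) in
theorem ext_finite_iff (hab : a * b = 0) (hm : a • m = 0) (hsurj : ∀ x : M, ∃ r : A, r • m = x)
    (hker : ∀ r : A, r • m = 0 → ∃ s, r = a * s)
    (h1 : ∀ r : A, a * r = 0 → ∃ s, r = b * s)
    (h2 : ∀ r : A, b * r = 0 → ∃ s, r = a * s) :
    Module.Finite K ↥(((Ext K (ModuleCat.{u} A) 1).obj
            (Opposite.op (ModuleCat.of A M))).obj (ModuleCat.of A N)) ↔
    Module.Finite K (LinearMap.ker (Algebra.lsmul K K N b) ⧸
      (LinearMap.range (Algebra.lsmul K K N a)).submoduleOf (LinearMap.ker (Algebra.lsmul K K N b))) := by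
  let e := (perRes a b hab M m hm hsurj hker h1 h2).isoExt (R := K) 1 (ModuleCat.of A N)
  let e2 : ((perCx a b hab).linearYonedaObj K (ModuleCat.of A N)).homology 1 ≅
    (((perCx a b hab).linearYonedaObj K (ModuleCat.of A N)).sc' 0 1 2).homology :=
    ShortComplex.homologyMapIso
      (((perCx a b hab).linearYonedaObj K (ModuleCat.of A N)).isoSc' 0 1 2 (by simp) (by simp))
  let e3 := ShortComplex.homologyMapIso (scIso a b hab K N)
  exact Module.Finite.equiv_iff ((e ≪≫ e2 ≪≫ e3).toLinearEquiv.trans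
    (homologyEquivQuot (scN a b hab K N)))
end
end AuxCat

section AuxAlg
open TensorProduct
section
variable {K A N : Type u} [Field K] [CommRing A] [Algebra K A] [AddCommGroup N] [Module A N]
  [Module K N] [IsScalarTower K A N] (t : A) (q : ℕ)

abbrev QuotExt (K : Type u) {A : Type u} (N : Type u) [Field K] [CommRing A] [Algebra K A] [AddCommGroup N] [Module A N]
  [Module K N] [IsScalarTower K A N] (t : A) (q : ℕ) : Type u :=
  (LinearMap.ker (Algebra.lsmul K K N (t ^ q)) ⧸
      (LinearMap.range (Algebra.lsmul K K N t)).submoduleOf (LinearMap.ker (Algebra.lsmul K K N (t ^ q))))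

theorem free_div {F : Type u} [AddCommGroup F] [Module A F] [Module.Free A F]
    (h2 : ∀ r : A, t ^ q * r = 0 → ∃ s, r = t * s) (f : F) (hf : t ^ q • f = 0) :
    ∃ g : F, f = t • g := by
  let b := Module.Free.chooseBasis A F
  have h : ∀ i, ∃ s, b.repr f i = t * s := fun i => h2 _ (by
    have := congrArg (fun x => b.repr x i) hf
    simpa using this)
  choose s hs using h
  refine ⟨∑ i ∈ (b.repr f).support, s i • b i, ?_⟩
  conv_lhs => rw [← b.linearCombination_repr f]
  rw [Finsupp.linearCombination_apply, Finsupp.sum, Finset.smul_sum]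
  refine Finset.sum_congr rfl fun i _ => ?_
  rw [hs i, mul_smul]

theorem forward_dir (h2 : ∀ r : A, t ^ q * r = 0 → ∃ s, r = t * s)
    (D F : Submodule A N) (hc : IsCompl D F) (hD : Module.Finite K D) (hF : Module.Free A F) :
    Module.Finite K (QuotExt K N t q) := by
  let W : Submodule K D := LinearMap.ker (Algebra.lsmul K K D (t ^ q))
  let j : W →ₗ[K] LinearMap.ker (Algebra.lsmul K K N (t ^ q)) :=
    LinearMap.codRestrict _ ((D.subtype.restrictScalars K) ∘ₗ W.subtype) (fun w => by
      have := w.2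
      simp only [W, LinearMap.mem_ker, Algebra.lsmul_coe] at this ⊢
      exact congrArg Subtype.val this)
  refine Module.Finite.of_surjective ((Submodule.mkQ _) ∘ₗ j) ?_
  intro x
  obtain ⟨⟨n, hn⟩, rfl⟩ := Submodule.mkQ_surjective _ x
  have hn' : t ^ q • n = 0 := hn
  have : n ∈ D ⊔ F := by rw [hc.sup_eq_top]; trivial
  obtain ⟨d, hd, f, hf, rfl⟩ := Submodule.mem_sup.1 this
  rw [smul_add] at hn'
  have hz := Submodule.disjoint_def.1 hc.disjoint (t ^ q • d) (D.smul_mem _ hd) (by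
    rw [eq_neg_of_add_eq_zero_left hn']
    exact F.neg_mem (F.smul_mem _ hf))
  rw [hz, zero_add] at hn'
  obtain ⟨g, hg⟩ := free_div t q h2 (⟨f, hf⟩ : F) (Subtype.ext hn')
  refine ⟨⟨⟨d, hd⟩, Subtype.ext hz⟩, ?_⟩
  simp only [LinearMap.comp_apply, Submodule.mkQ_apply]
  rw [Submodule.Quotient.eq]
  refine ⟨-(g : N), ?_⟩
  have hg' : f = t • (g : N) := congrArg Subtype.val hg
  simp [j, hg']

theorem fin_of_quot (D : Type u) [AddCommGroup D] [Module A D] [Module K D] [IsScalarTower K A D]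
    (hD : ∀ d : D, t ^ (q + 1) • d = 0) {Q : Type u} [AddCommGroup Q] [Module K Q]
    [Module.Finite K Q] (φ : D →ₗ[K] Q) (hφ : ∀ d, φ d = 0 → ∃ d', d = t • d') :
    Module.Finite K D := by
  obtain ⟨W, hW⟩ := Submodule.exists_isCompl (LinearMap.ker φ)
  have hWf : Module.Finite K W := by
    refine Module.Finite.of_injective (φ ∘ₗ W.subtype) ?_
    rw [← LinearMap.ker_eq_bot, LinearMap.ker_eq_bot']
    intro w hw
    exact Subtype.ext (Submodule.disjoint_def.1 hW.disjoint w hw w.2)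
  have hdec : ∀ d : D, ∃ w ∈ W, ∃ d', d = w + t • d' := by
    intro d
    have : d ∈ LinearMap.ker φ ⊔ W := by rw [hW.sup_eq_top]; trivial
    obtain ⟨k, hk, w, hw, rfl⟩ := Submodule.mem_sup.1 this
    obtain ⟨d', rfl⟩ := hφ k hk
    exact ⟨w, hw, d', add_comm _ _⟩
  have key : ∀ k : ℕ, ∃ U : Submodule K D, U.FG ∧ ∀ d : D, ∃ u ∈ U, ∃ d', d = u + t ^ k • d' := by
    intro k
    induction k with
    | zero => exact ⟨⊥, Submodule.fg_bot, fun d => ⟨0, by simp, d, by simp⟩⟩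
    | succ k ih =>
      obtain ⟨U, hU, h⟩ := ih
      refine ⟨U ⊔ W.map (Algebra.lsmul K K D (t ^ k)),
        hU.sup ((Module.Finite.iff_fg.1 hWf).map _), fun d => ?_⟩
      obtain ⟨u, hu, d', rfl⟩ := h d
      obtain ⟨w, hw, d'', rfl⟩ := hdec d'
      refine ⟨u + t ^ k • w, Submodule.add_mem_sup hu ⟨w, hw, rfl⟩, d'', ?_⟩
      rw [smul_add, smul_smul, pow_succ, add_assoc]
  obtain ⟨U, hU, h⟩ := key (q + 1)
  have : U = ⊤ := by
    rw [eq_top_iff]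
    rintro d -
    obtain ⟨u, hu, d', rfl⟩ := h d
    rw [hD, add_zero]
    exact hu
  exact ⟨this ▸ hU⟩

theorem alin (hgen : Algebra.adjoin K {t} = ⊤) {M : Type u} [AddCommGroup M] [Module A M]
    [Module K M] [IsScalarTower K A M] (f : N →ₗ[K] M) (hf : ∀ n, f (t • n) = t • f n)
    (a : A) : ∀ n, f (a • n) = a • f n := by
  have ha : a ∈ Algebra.adjoin K {t} := by rw [hgen]; trivial
  induction ha using Algebra.adjoin_induction with
  | mem x hx => rw [Set.mem_singleton_iff] at hx; subst hx; exact hf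
  | algebraMap r => intro n; rw [algebraMap_smul, algebraMap_smul, map_smul]
  | add x y _ _ hx hy => intro n; rw [add_smul, add_smul, map_add, hx, hy]
  | mul x y _ _ hx hy => intro n; rw [mul_smul, mul_smul, hx, hy]

theorem backward_dir (hgen : Algebra.adjoin K {t} = ⊤) (htp : t ^ (q + 1) = 0)
    (hQ : Module.Finite K (QuotExt K N t q)) :
    ∃ D F : Submodule A N, IsCompl D F ∧ Module.Finite K D ∧ Module.Free A F := by
  let T : N →ₗ[K] N := Algebra.lsmul K K N (t ^ q)
  let S : Submodule K N := LinearMap.range T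
  obtain ⟨s, hs⟩ := T.rangeRestrict.exists_rightInverse_of_surjective T.range_rangeRestrict
  obtain ⟨π, hπ⟩ := S.subtype.exists_leftInverse_of_injective S.ker_subtype
  have hs' : ∀ x : S, t ^ q • s x = (x : N) := fun x =>
    congrArg Subtype.val (LinearMap.congr_fun hs x)
  have hπ' : ∀ x : S, π (x : N) = x := fun x => LinearMap.congr_fun hπ x
  let ψ0 : N →ₗ[K] A ⊗[K] S := ∑ i ∈ Finset.range (q + 1),
    (TensorProduct.mk K A S (t ^ (q - i))) ∘ₗ π ∘ₗ (Algebra.lsmul K K N (t ^ i))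
  have hψ0 : ∀ n, ψ0 n = ∑ i ∈ Finset.range (q + 1), (t ^ (q - i)) ⊗ₜ[K] π (t ^ i • n) := by
    intro n
    simp only [ψ0, LinearMap.sum_apply, LinearMap.comp_apply, TensorProduct.mk_apply, Algebra.lsmul_coe]
  have hψt : ∀ n, ψ0 (t • n) = t • ψ0 n := by
    intro n
    rw [hψ0, hψ0, Finset.sum_range_succ, Finset.sum_range_succ', smul_add, Finset.smul_sum]
    congr 1
    · refine Finset.sum_congr rfl fun i hi => ?_
      rw [Finset.mem_range] at hi
      rw [TensorProduct.smul_tmul', smul_smul, ← pow_succ, smul_eq_mul, ← pow_succ']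
      congr 2
      omega
    · rw [TensorProduct.smul_tmul', smul_smul, ← pow_succ, smul_eq_mul, ← pow_succ',
        Nat.sub_zero, htp]
      simp
  let ψ : N →ₗ[A] A ⊗[K] S :=
    { toFun := ψ0, map_add' := map_add ψ0, map_smul' := alin t hgen ψ0 hψt }
  have hψ : ∀ n, ψ n = ∑ i ∈ Finset.range (q + 1), (t ^ (q - i)) ⊗ₜ[K] π (t ^ i • n) := hψ0
  let σ : A ⊗[K] S →ₗ[A] N := LinearMap.liftBaseChange A s
  have hσ : ∀ (a : A) (x : S), σ (a ⊗ₜ x) = a • s x := fun a x => by simp [σ]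
  let δ : Module.End A (A ⊗[K] S) := ψ ∘ₗ σ - 1
  have hδ : ∀ x, ∃ y, δ x = t • y := by
    intro x
    induction x using TensorProduct.induction_on with
    | zero => exact ⟨0, by simp⟩
    | add x y hx hy =>
      obtain ⟨x', hx⟩ := hx
      obtain ⟨y', hy⟩ := hy
      exact ⟨x' + y', by rw [map_add, hx, hy, smul_add]⟩
    | tmul a x =>
      refine ⟨a • ∑ i ∈ Finset.range q, (t ^ (q - (i + 1))) ⊗ₜ[K] π (t ^ i • s x), ?_⟩
      have : a ⊗ₜ[K] x = a • ((1 : A) ⊗ₜ[K] x) := by rw [TensorProduct.smul_tmul', smul_eq_mul, mul_one]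
      rw [this, map_smul, smul_comm t a]
      congr 1
      simp only [δ, LinearMap.sub_apply, LinearMap.comp_apply, Module.End.one_apply]
      rw [hσ, one_smul, hψ, Finset.sum_range_succ, hs', hπ', Nat.sub_self, pow_zero, add_sub_cancel_right,
        Finset.smul_sum]
      refine Finset.sum_congr rfl fun i hi => ?_
      rw [Finset.mem_range] at hi
      rw [TensorProduct.smul_tmul', smul_eq_mul, ← pow_succ']
      congr 2
      omega
  have hδk : ∀ k x, ∃ y, (δ ^ k) x = t ^ k • y := by
    intro k
    induction k with
    | zero => intro x; exact ⟨x, by simp⟩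
    | succ k ih =>
      intro x
      obtain ⟨y, hy⟩ := ih x
      obtain ⟨z, hz⟩ := hδ y
      exact ⟨z, by rw [pow_succ', Module.End.mul_apply, hy, map_smul, hz, smul_smul, pow_succ]⟩
  have hnil : IsNilpotent δ := ⟨q + 1, by
    refine LinearMap.ext fun x => ?_
    obtain ⟨y, hy⟩ := hδk (q + 1) x
    rw [hy, htp, zero_smul]; rfl⟩
  have hunit : IsUnit (ψ ∘ₗ σ : Module.End A (A ⊗[K] S)) := by
    have := IsNilpotent.isUnit_one_add (R := Module.End A (A ⊗[K] S)) (r := δ) hnil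
    have e : 1 + δ = ψ ∘ₗ σ := LinearMap.ext fun x => by
      show x + (ψ (σ x) - x) = ψ (σ x)
      abel
    exact e ▸ this
  have hbij := (Module.End.isUnit_iff _).1 hunit
  have hinj : Function.Injective σ := fun x y h => hbij.1 (by
    simp only [LinearMap.comp_apply, h])
  have hcompl : IsCompl (LinearMap.ker ψ) (LinearMap.range σ) := by
    constructor
    · rw [Submodule.disjoint_def]
      rintro _ hx ⟨y, rfl⟩
      have : (ψ ∘ₗ σ) y = (ψ ∘ₗ σ) 0 := by rw [map_zero]; exact hx
      rw [hbij.1 this, map_zero]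
    · rw [codisjoint_iff, eq_top_iff]
      rintro n -
      obtain ⟨y, hy⟩ := hbij.2 (ψ n)
      have hy' : ψ (σ y) = ψ n := hy
      rw [← sub_add_cancel n (σ y)]
      exact Submodule.add_mem_sup (by rw [LinearMap.mem_ker, map_sub, hy', sub_self]) ⟨y, rfl⟩
  refine ⟨LinearMap.ker ψ, LinearMap.range σ, hcompl, ?_,
    Module.Free.of_equiv (LinearEquiv.ofInjective σ hinj)⟩
  have hD : ∀ n ∈ LinearMap.ker ψ, t ^ q • n = 0 := by
    intro n hn
    let x : S := ⟨t ^ q • n, n, rfl⟩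
    have h1 : ψ (t ^ q • n) = (t ^ q) ⊗ₜ[K] x := by
      rw [hψ, Finset.sum_range_succ']
      rw [Finset.sum_eq_zero, zero_add, pow_zero, one_smul, Nat.sub_zero]
      · congr 1
        exact hπ' x
      · intro i _
        rw [smul_smul, ← pow_add, show i + 1 + q = (q + 1) + i by omega, pow_add, htp]
        simp
    rw [map_smul, hn, smul_zero] at h1
    have h2 := congrArg σ h1
    rw [hσ, hs', map_zero] at h2
    exact h2.symm
  let j : LinearMap.ker ψ →ₗ[K] LinearMap.ker (Algebra.lsmul K K N (t ^ q)) :=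
    LinearMap.codRestrict _ ((LinearMap.ker ψ).subtype.restrictScalars K) (fun w => hD w w.2)
  refine fin_of_quot (Q := QuotExt K N t q) t q (LinearMap.ker ψ)
    (fun d => by rw [htp, zero_smul]) ((Submodule.mkQ _) ∘ₗ j) ?_
  intro d hd
  rw [LinearMap.comp_apply, Submodule.mkQ_apply, Submodule.Quotient.mk_eq_zero] at hd
  obtain ⟨n, hn⟩ := hd
  have hn' : t • n = (d : N) := hn
  have : n ∈ LinearMap.ker ψ ⊔ LinearMap.range σ := by rw [hcompl.sup_eq_top]; trivial
  obtain ⟨d', hd', f, hf, rfl⟩ := Submodule.mem_sup.1 this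
  refine ⟨⟨d', hd'⟩, Subtype.ext ?_⟩
  have hz : t • f = 0 := by
    refine Submodule.disjoint_def.1 hcompl.disjoint _ ?_ (Submodule.smul_mem _ _ hf)
    rw [smul_add] at hn'
    rw [← add_sub_cancel_left (t • d') (t • f), hn']
    exact Submodule.sub_mem _ d.2 (Submodule.smul_mem _ _ hd')
  rw [← hn', smul_add, hz, add_zero]
  rfl
end
end AuxAlg

/-- Let `K` be a field of characteristic `p > 0` and `A = K[t]/(t^p)`, with `K` regarded as the
`A`-module `A/(t)` (i.e. the `A`-module structure on `K` is `K`-linear and `t` acts as zero).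
An `A`-module `N` is isomorphic to a direct sum `D ⊕ F` with `D` a finite-dimensional `K`-vector
space and `F` a free `A`-module, if and only if `Ext¹_A(K, N)` is a finite-dimensional
`K`-vector space. -/
theorem stablyFiniteDimensional_iff_ext_finite
    (K : Type u) [Field K] (p : ℕ) [Fact p.Prime] [CharP K p]
    [Module (TruncatedPolynomialAlgebra K p) K]
    [IsScalarTower K (TruncatedPolynomialAlgebra K p) K]
    (ht : ∀ x : K,
      (Ideal.Quotient.mk (Ideal.span {(Polynomial.X : Polynomial K) ^ p})
        Polynomial.X) • x = 0)
    (N : Type u) [AddCommGroup N] [Module (TruncatedPolynomialAlgebra K p) N]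
    [Module K N] [IsScalarTower K (TruncatedPolynomialAlgebra K p) N] :
    (∃ D F : Submodule (TruncatedPolynomialAlgebra K p) N,
        IsCompl D F ∧ Module.Finite K ↥D ∧
          Module.Free (TruncatedPolynomialAlgebra K p) ↥F) ↔
      Module.Finite K
        ↥(((Ext K (ModuleCat.{u} (TruncatedPolynomialAlgebra K p)) 1).obj
            (Opposite.op (ModuleCat.of (TruncatedPolynomialAlgebra K p) K))).obj
          (ModuleCat.of (TruncatedPolynomialAlgebra K p) N)) := by
  have hp : p - 1 + 1 = p := Nat.sub_add_cancel (Fact.out : p.Prime).one_le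
  set t : TruncatedPolynomialAlgebra K p :=
    Ideal.Quotient.mk (Ideal.span {(Polynomial.X : Polynomial K) ^ p}) Polynomial.X with htdef
  have htp : t ^ (p - 1 + 1) = 0 := by
    rw [hp, htdef, ← map_pow, Ideal.Quotient.eq_zero_iff_mem]
    exact Ideal.mem_span_singleton_self _
  have hab : t * t ^ (p - 1) = 0 := by rw [← pow_succ', htp]
  have h1 : ∀ r, t * r = 0 → ∃ s, r = t ^ (p - 1) * s := by
    intro r hr
    obtain ⟨f, rfl⟩ := Ideal.Quotient.mk_surjective r
    rw [htdef, ← map_mul, Ideal.Quotient.eq_zero_iff_mem, Ideal.mem_span_singleton] at hr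
    nth_rewrite 1 [← hp] at hr
    rw [pow_succ'] at hr
    obtain ⟨g, rfl⟩ := (mul_dvd_mul_iff_left Polynomial.X_ne_zero).1 hr
    exact ⟨Ideal.Quotient.mk _ g, by rw [map_mul, map_pow]⟩
  have h2 : ∀ r, t ^ (p - 1) * r = 0 → ∃ s, r = t * s := by
    intro r hr
    obtain ⟨f, rfl⟩ := Ideal.Quotient.mk_surjective r
    rw [htdef, ← map_pow, ← map_mul, Ideal.Quotient.eq_zero_iff_mem, Ideal.mem_span_singleton] at hr
    nth_rewrite 1 [← hp] at hr
    rw [pow_succ] at hr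
    obtain ⟨g, rfl⟩ := (mul_dvd_mul_iff_left (pow_ne_zero _ Polynomial.X_ne_zero)).1 hr
    exact ⟨Ideal.Quotient.mk _ g, by rw [map_mul]⟩
  have hC : ∀ c : K, (Ideal.Quotient.mk (Ideal.span {(Polynomial.X : Polynomial K) ^ p})
      (Polynomial.C c)) • (1 : K) = c := by
    intro c
    have : (algebraMap K (TruncatedPolynomialAlgebra K p) c) • (1 : K) = c • (1 : K) :=
      algebraMap_smul _ _ _
    rw [smul_eq_mul, mul_one] at this
    exact this
  have hsurj : ∀ x : K, ∃ r : TruncatedPolynomialAlgebra K p, r • (1 : K) = x :=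
    fun x => ⟨_, hC x⟩
  have hker : ∀ r : TruncatedPolynomialAlgebra K p, r • (1 : K) = 0 → ∃ s, r = t * s := by
    intro r hr
    obtain ⟨f, rfl⟩ := Ideal.Quotient.mk_surjective r
    rw [← Polynomial.X_mul_divX_add f] at hr ⊢
    rw [map_add, map_mul, add_smul, mul_smul, ht, zero_add, hC] at hr
    exact ⟨Ideal.Quotient.mk _ f.divX, by rw [hr, map_zero, add_zero, map_mul]⟩
  have hgen : Algebra.adjoin K {t} = ⊤ := by
    have h := congrArg (Subalgebra.map (Ideal.Quotient.mkₐ K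
      (Ideal.span {(Polynomial.X : Polynomial K) ^ p}))) (Polynomial.adjoin_X (R := K))
    rw [AlgHom.map_adjoin, Set.image_singleton, Algebra.map_top,
      (AlgHom.range_eq_top _).2 (Ideal.Quotient.mkₐ_surjective K _)] at h
    exact h
  rw [ext_finite_iff t (t ^ (p - 1)) K 1 K N hab (ht 1) hsurj hker h1 h2]
  constructor
  · rintro ⟨D, F, hc, hD, hF⟩
    exact forward_dir t (p - 1) h2 D F hc hD hF
  · intro hQ
    exact backward_dir t (p - 1) hgen htp hQ
end
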